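/- Let G = (U, W; E) be a finite bipartite graph possibly with parallel edges, with preference functions p_v for every vertex v, a matroid M_v on E(v) for every vertex v, a set C ⊆ U ∪ W of critical vertices, a set E_c ⊆ E of critical edges such that every critical edge is incident to at least one critical vertex, and reals 0 < γ_e^v < δ_e^v for every edge e and endpoint v of e. Then there exists a common independent set M such that (i) M is critical, (ii) no edge cγ-blocks M (so M is cγ-stable), and (iii) every cγ-stable common independent set N of the instance satisfies 2|N| ≤ 3|M|. -/

import Mathlib

open scoped Classical

/-- The finset `{x}` for `some x`, and `∅` for `none`. -/
def oset {E : Type*} : Option E → Finset E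
  | none => ∅
  | some x => {x}

/-- The preference value of an optional edge: `p(∅) = 0`. -/
def oval {E : Type*} (p : E → ℝ) : Option E → ℝ
  | none => 0
  | some x => p x

/-- `M` is a common independent set: `M ∩ E(v)` is independent in the matroid `M_v` of
every vertex `v`. -/
noncomputable def CommonIndep {U W E : Type*} (eu : E → U) (ew : E → W)
    (mU : U → Matroid E) (mW : W → Matroid E) (M : Finset E) : Prop :=
  (∀ u, (mU u).Indep ((M.filter (fun f => eu f = u) : Finset E) : Set E)) ∧
  (∀ w, (mW w).Indep ((M.filter (fun f => ew f = w) : Finset E) : Set E))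

/-- The number `Σ_{v ∈ C} |M(v) ∩ E_c|` of places of critical vertices filled by the
critical edges of `M`. -/
noncomputable def critPlaces {U W E : Type*} [DecidableEq E] (eu : E → U) (ew : E → W)
    (C : Finset (U ⊕ W)) (Ec : Finset E) (M : Finset E) : ℕ :=
  ∑ v ∈ C, ((M ∩ Ec).filter (fun f =>
    Sum.elim (fun u => eu f = u) (fun w => ew f = w) v)).card

/-- A common independent set `M` is critical if `Σ_{v ∈ C} |M(v) ∩ E_c|` is maximum among
all common independent sets. -/
noncomputable def IsCriticalCI {U W E : Type*} [DecidableEq E] (eu : E → U) (ew : E → W)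
    (mU : U → Matroid E) (mW : W → Matroid E) (C : Finset (U ⊕ W)) (Ec : Finset E)
    (M : Finset E) : Prop :=
  ∀ N : Finset E, CommonIndep eu ew mU mW N →
    critPlaces eu ew C Ec N ≤ critPlaces eu ew C Ec M

/-- The edge `e = (u, w) ∉ M` cγ-blocks the common independent set `M`. -/
noncomputable def CGBlocksCI {U W E : Type*} [DecidableEq E] (eu : E → U) (ew : E → W)
    (mU : U → Matroid E) (mW : W → Matroid E) (pU pW γU δU γW δW : E → ℝ)
    (C : Finset (U ⊕ W)) (Ec : Finset E) (M : Finset E) (e : E) : Prop :=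
  e ∉ M ∧ ∃ f g : Option E,
    (∀ f', f = some f' → f' ∈ M ∧ eu f' = eu e) ∧
    (∀ g', g = some g' → g' ∈ M ∧ ew g' = ew e) ∧
    CommonIndep eu ew mU mW (insert e (M \ (oset f ∪ oset g))) ∧
    IsCriticalCI eu ew mU mW C Ec (insert e (M \ (oset f ∪ oset g))) ∧
    (mU (eu e)).Indep
      ((insert e (M.filter (fun f' => eu f' = eu e) \ oset f) : Finset E) : Set E) ∧
    (mW (ew e)).Indep
      ((insert e (M.filter (fun f' => ew f' = ew e) \ oset g) : Finset E) : Set E) ∧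
    ((pU e - oval pU f ≥ γU e ∧ pW e - oval pW g ≥ δW e) ∨
     (pU e - oval pU f ≥ δU e ∧ pW e - oval pW g ≥ γW e))

/-!
The matroids of the vertices of `U` sum to one matroid on `E`, those of `W` to another, and the
critical places filled by a set of edges are a weight `c`. Take copies of each edge `e`, every copy
carrying a level for each side, and let each side rank the copies first by level and then by
preference. Plain copies have levels of sum `K * c e + 1`; marked copies have one level more in
total, but their preferences are lowered by one of the two pairs of thresholds. Let `M` be given by
a matroid kernel of the copies.

Counting the levels at which an edge of a common independent set `N` is spanned gives
`K * c N ≤ K * c M + 2 * |M|`, so `M` is critical once `K > 2 * |E|`. An edge blocking `M` would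
have a marked copy that the kernel dominates on neither side. Finally, if `N` is critical and
unblocked, then on each side all but `|M|` of its elements can be matched to elements of `M` that
may be exchanged for a worse element of `N`. An element of `M` exchangeable on both sides would
block `N`, hence `2 * |N| ≤ 2 * |M| + |M|`.
-/

section MatroidKernel

variable {X Z L L₁ L₂ : Type*} [LinearOrder L] [LinearOrder L₁] [LinearOrder L₂]
  {M M₁ M₂ : Matroid X} {r : X → L} {S : Set X}

/-- The elements of `S` spanned by strictly better elements of `S`, for a ranking `r` in which
larger is better. They are the elements that the greedy algorithm on `S` discards. -/
def rejected (M : Matroid X) (r : X → L) (S : Set X) : Set X :=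
  {e ∈ S | e ∈ M.closure {f ∈ S | r e < r f}}

theorem rejected_mono (M : Matroid X) (r : X → L) : Monotone (rejected M r) := by
  intro S T hST e ⟨heS, he⟩
  refine ⟨hST heS, M.closure_subset_closure ?_ he⟩
  exact fun f hf => ⟨hST hf.1, hf.2⟩

theorem indep_sdiff_rejected [M.Finitary] (hr : S.InjOn r) (hS : S ⊆ M.E) :
    M.Indep (S \ rejected M r S) := by
  by_contra hdep
  rw [Matroid.not_indep_iff (Set.sdiff_subset.trans hS)] at hdep
  obtain ⟨C, hCS, hC⟩ := hdep.exists_isCircuit_subset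
  obtain ⟨e, heC, hmin⟩ := Set.exists_min_image C r hC.finite hC.nonempty
  have hbetter : C \ {e} ⊆ {f ∈ S | r e < r f} := fun f hf =>
    ⟨(hCS hf.1).1, (hmin f hf.1).lt_of_ne
      fun heq => hf.2 (hr (hCS hf.1).1 (hCS heC).1 heq.symm)⟩
  exact (hCS heC).2 ⟨(hCS heC).1,
    M.closure_subset_closure hbetter (hC.mem_closure_sdiff_singleton_of_mem heC)⟩

theorem mem_closure_sdiff_rejected (hfin : S.Finite) (hS : S ⊆ M.E) {e : X} (he : e ∈ S) :
    e ∈ M.closure {f ∈ S \ rejected M r S | r e ≤ r f} := by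
  by_contra hbad
  obtain ⟨b, ⟨hbS, hb⟩, hmax⟩ := Set.exists_max_image
    {e ∈ S | e ∉ M.closure {f ∈ S \ rejected M r S | r e ≤ r f}} r
    (hfin.subset (Set.sep_subset _ _)) ⟨e, he, hbad⟩
  have hrej : b ∈ rejected M r S := by
    by_contra hacc
    exact hb (M.mem_closure_of_mem' ⟨⟨hbS, hacc⟩, le_rfl⟩ (hS hbS))
  refine hb (M.closure_subset_closure_of_subset_closure ?_ hrej.2)
  rintro g ⟨hgS, hbg⟩
  have hg : g ∈ M.closure {f ∈ S \ rejected M r S | r g ≤ r f} := by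
    by_contra hg
    exact (hmax g ⟨hgS, hg⟩).not_gt hbg
  refine M.closure_subset_closure ?_ hg
  exact fun f hf => ⟨hf.1, hbg.le.trans hf.2⟩

/-- A kernel of two matroids on a common ground set, each with a ranking in which larger is
better: a common independent set `K` such that every element is spanned, in one of the two
matroids, by elements of `K` that this matroid ranks at least as high. This is Fleiner's matroid
version of a stable matching. -/
structure IsMatroidKernel (M₁ M₂ : Matroid X) (r₁ : X → L₁) (r₂ : X → L₂) (K : Set X) :
    Prop where
  indep₁ : M₁.Indep K
  indep₂ : M₂.Indep K
  dominated : ∀ e ∈ M₁.E,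
    e ∈ M₁.closure {f ∈ K | r₁ e ≤ r₁ f} ∨ e ∈ M₂.closure {f ∈ K | r₂ e ≤ r₂ f}

theorem exists_isMatroidKernel_of_injective [M₁.Finite] (hE : M₁.E = M₂.E) {r₁ : X → L₁}
    {r₂ : X → L₂} (hr₁ : r₁.Injective) (hr₂ : r₂.Injective) :
    ∃ K, IsMatroidKernel M₁ M₂ r₁ r₂ K := by
  have : M₂.Finite := ⟨hE ▸ M₁.ground_finite⟩
  -- The set `S` offered to `M₁` consists of what `M₂` does not reject from `T`, and vice versa.
  obtain ⟨S, T, hS, hT⟩ : ∃ S T, S = M₁.E \ rejected M₂ r₂ T ∧ T = M₁.E \ rejected M₁ r₁ S := by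
    let Φ : Set X →o Set X :=
      ⟨fun S => M₁.E \ rejected M₂ r₂ (M₁.E \ rejected M₁ r₁ S), fun _ _ h =>
        Set.sdiff_subset_sdiff_right (rejected_mono M₂ r₂
          (Set.sdiff_subset_sdiff_right (rejected_mono M₁ r₁ h)))⟩
    exact ⟨Φ.lfp, _, Φ.map_lfp.symm, rfl⟩
  have hSE : S ⊆ M₁.E := hS ▸ Set.sdiff_subset
  have hTE : T ⊆ M₁.E := hT ▸ Set.sdiff_subset
  have hK₁ : S \ rejected M₁ r₁ S = S ∩ T := by grind
  have hK₂ : T \ rejected M₂ r₂ T = S ∩ T := by grind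
  refine ⟨S ∩ T, hK₁ ▸ indep_sdiff_rejected hr₁.injOn hSE,
    hK₂ ▸ indep_sdiff_rejected hr₂.injOn (hE ▸ hTE), fun e he => ?_⟩
  by_cases heS : e ∈ S
  · exact .inl (hK₁ ▸ mem_closure_sdiff_rejected (M₁.ground_finite.subset hSE) hSE heS)
  · have heT : e ∈ T := hT ▸ ⟨he, fun hrej => heS hrej.1⟩
    exact .inr (hK₂ ▸
      mem_closure_sdiff_rejected (M₁.ground_finite.subset hTE) (hE ▸ hTE) heT)

theorem exists_isMatroidKernel [M₁.Finite] (hE : M₁.E = M₂.E) (r₁ : X → L₁) (r₂ : X → L₂) :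
    ∃ K, IsMatroidKernel M₁ M₂ r₁ r₂ K := by
  obtain ⟨_, -⟩ := exists_wellFoundedLT X
  obtain ⟨K, hK⟩ := exists_isMatroidKernel_of_injective hE
    (r₁ := fun x => toLex (r₁ x, x)) (r₂ := fun x => toLex (r₂ x, x))
    (fun _ _ h => congrArg (fun y => (ofLex y).2) h)
    (fun _ _ h => congrArg (fun y => (ofLex y).2) h)
  refine ⟨K, hK.indep₁, hK.indep₂, fun e he => (hK.dominated e he).imp
    (fun h => M₁.closure_subset_closure ?_ h) (fun h => M₂.closure_subset_closure ?_ h)⟩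
  · exact fun f hf => ⟨hf.1, Prod.Lex.monotone_fst _ _ hf.2⟩
  · exact fun f hf => ⟨hf.1, Prod.Lex.monotone_fst _ _ hf.2⟩

/-- A kernel of the two matroids pulled back along `π : Z → X`, described on `X`: `M` is its image,
and `σ` picks the representative in `Z` of each element of `M`, which carries its rank. -/
structure IsLiftedKernel (M₁ M₂ : Matroid X) (π : Z → X) (r₁ : Z → L₁) (r₂ : Z → L₂)
    (M : Finset X) (σ : X → Z) : Prop where
  rightInverse : Function.RightInverse σ π
  indep₁ : M₁.Indep (M : Set X)
  indep₂ : M₂.Indep (M : Set X)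
  dominated : ∀ z, π z ∈ M₁.E → π z ∈ M₁.closure {m | m ∈ M ∧ r₁ z ≤ r₁ (σ m)} ∨
    π z ∈ M₂.closure {m | m ∈ M ∧ r₂ z ≤ r₂ (σ m)}

theorem exists_isLiftedKernel [Finite Z] (hE : M₁.E = M₂.E) {π : Z → X} (hπ : π.Surjective)
    (r₁ : Z → L₁) (r₂ : Z → L₂) : ∃ M σ, IsLiftedKernel M₁ M₂ π r₁ r₂ M σ := by
  obtain ⟨K, hK⟩ := exists_isMatroidKernel (M₁ := M₁.comap π) (M₂ := M₂.comap π)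
    (by rw [Matroid.comap_ground_eq, Matroid.comap_ground_eq, hE]) r₁ r₂
  obtain ⟨hindep₁, hinj⟩ := Matroid.comap_indep_iff.1 hK.indep₁
  obtain ⟨hindep₂, -⟩ := Matroid.comap_indep_iff.1 hK.indep₂
  have hsection (x : X) : ∃ z, π z = x ∧ (x ∈ π '' K → z ∈ K) := by
    by_cases hx : x ∈ π '' K
    · obtain ⟨z, hz, rfl⟩ := hx
      exact ⟨z, rfl, fun _ => hz⟩
    · obtain ⟨z, rfl⟩ := hπ x
      exact ⟨z, rfl, fun h => absurd h hx⟩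
  choose σ hσ hσK using hsection
  have hσπ : ∀ z ∈ K, σ (π z) = z := fun z hz =>
    hinj (hσK _ (Set.mem_image_of_mem π hz)) hz (hσ _)
  have himage (P : Z → Prop) :
      π '' {y ∈ K | P y} ⊆ {m | m ∈ (K.toFinite.image π).toFinset ∧ P (σ m)} := by
    rintro _ ⟨y, ⟨hy, hPy⟩, rfl⟩
    exact ⟨(Set.Finite.mem_toFinset _).2 (Set.mem_image_of_mem π hy), (hσπ y hy).symm ▸ hPy⟩
  refine ⟨(K.toFinite.image π).toFinset, σ, hσ, by simpa using hindep₁, by simpa using hindep₂,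
    fun z hz => ?_⟩
  have hdom := hK.dominated z hz
  rw [Matroid.comap_closure_eq, Matroid.comap_closure_eq] at hdom
  exact hdom.imp (fun h => M₁.closure_subset_closure (himage (r₁ z ≤ r₁ ·)) h)
    (fun h => M₂.closure_subset_closure (himage (r₂ z ≤ r₂ ·)) h)

end MatroidKernel

section MatroidCounting

variable {X L : Type*} [LinearOrder L] {Q : Matroid X} {N : Finset X}

theorem card_le_of_subset_closure {A : Finset X} (hN : Q.Indep (N : Set X))
    (h : (N : Set X) ⊆ Q.closure (A : Set X)) : N.card ≤ A.card := by
  have hrk := (hN.encard_le_eRk_of_subset h).trans_eq (Q.eRk_closure_eq _)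
  simpa only [Set.encard_coe_eq_coe_finsetCard, Nat.cast_le] using hrk.trans (Q.eRk_le_encard _)

theorem card_filter_mem_closure_le (hN : Q.Indep (N : Set X)) (A : Finset X) :
    (N.filter (· ∈ Q.closure (A : Set X))).card ≤ A.card :=
  card_le_of_subset_closure (hN.subset (Finset.coe_subset.2 (Finset.filter_subset _ _)))
    fun _ hx => (Finset.mem_filter.1 (Finset.mem_coe.1 hx)).2

theorem mem_closure_sdiff_of_forall_mem_closure {I D : Set X} {m : X} (hI : Q.Indep I)
    (hD : D.Nonempty) (h : ∀ e ∈ D, m ∈ Q.closure (I \ {e})) : m ∈ Q.closure (I \ D) := by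
  have hInter : I \ D = ⋂ e ∈ D, I \ {e} := by
    ext x
    simp only [Set.mem_sdiff, Set.mem_iInter, Set.mem_singleton_iff]
    obtain ⟨d, hd⟩ := hD
    exact ⟨fun hx e he => ⟨hx.1, fun hxe => hx.2 (hxe ▸ he)⟩,
      fun hx => ⟨(hx d hd).1, fun hxD => (hx x hxD).2 rfl⟩⟩
  rw [hInter, Matroid.closure_biInter_eq_biInter_closure_of_biUnion_indep (I := fun e => I \ {e})
    hD (hI.subset (Set.iUnion₂_subset fun _ _ => Set.sdiff_subset))]
  exact Set.mem_iInter₂.2 h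

theorem subset_closure_union_sdiff {I J S Γ : Set X} (hI : Q.Indep I) (hJ : J.Finite)
    (hΓE : Γ ⊆ Q.E) (r rS : X → L)
    (hspan : ∀ e ∈ J, e ∈ Q.closure {m ∈ S | r e ≤ rS m})
    (hΓ : ∀ m ∈ S \ Γ, ∀ e ∈ J, r e ≤ rS m → m ∈ Q.closure (I \ {e})) :
    I ⊆ Q.closure (Γ ∪ I \ J) := by
  have hself : Γ ∪ I \ J ⊆ Q.closure (Γ ∪ I \ J) :=
    Q.subset_closure _ (Set.union_subset hΓE (Set.sdiff_subset.trans hI.subset_ground))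
  suffices hJ : ∀ e ∈ J, e ∈ Q.closure (Γ ∪ I \ J) by
    intro e he
    by_cases heJ : e ∈ J
    · exact hJ e heJ
    · exact hself (.inr ⟨he, heJ⟩)
  by_contra! hbad
  obtain ⟨b, ⟨hbJ, hb⟩, hmax⟩ :=
    Set.exists_max_image {e ∈ J | e ∉ Q.closure (Γ ∪ I \ J)} r (hJ.subset (Set.sep_subset _ _)) hbad
  refine hb (Q.closure_subset_closure_of_subset_closure ?_ (hspan b hbJ))
  rintro m ⟨hmS, hbm⟩
  by_cases hmΓ : m ∈ Γ
  · exact hself (.inl hmΓ)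
  have hm : m ∈ Q.closure (I \ {e ∈ J | r e ≤ rS m}) :=
    mem_closure_sdiff_of_forall_mem_closure hI ⟨b, hbJ, hbm⟩
      fun e he => hΓ m ⟨hmS, hmΓ⟩ e he.1 he.2
  refine Q.closure_subset_closure_of_subset_closure ?_ hm
  rintro z ⟨hzI, hz⟩
  by_cases hzJ : z ∈ J
  · by_contra hzbad
    exact hz ⟨hzJ, (hmax z ⟨hzJ, hzbad⟩).trans hbm⟩
  · exact hself (.inr ⟨hzI, hzJ⟩)

theorem exists_exchangeable_subset {J S : Finset X} (hN : Q.Indep (N : Set X)) (hJN : J ⊆ N)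
    (hS : (S : Set X) ⊆ Q.E) (r rS : X → L)
    (hspan : ∀ e ∈ J, e ∈ Q.closure {m | m ∈ S ∧ r e ≤ rS m}) :
    ∃ Γ ⊆ S, J.card ≤ Γ.card ∧
      ∀ m ∈ Γ, ∃ e ∈ J, r e ≤ rS m ∧ m ∉ Q.closure ((N : Set X) \ {e}) := by
  let Γ := S.filter fun m => ∃ e ∈ J, r e ≤ rS m ∧ m ∉ Q.closure ((N : Set X) \ {e})
  have hΓS : Γ ⊆ S := Finset.filter_subset _ _
  refine ⟨Γ, hΓS, ?_, fun m hm => (Finset.mem_filter.1 hm).2⟩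
  have hclosure : (N : Set X) ⊆ Q.closure ((Γ ∪ N \ J : Finset X) : Set X) := by
    rw [Finset.coe_union, Finset.coe_sdiff]
    refine subset_closure_union_sdiff hN J.finite_toSet ((Finset.coe_subset.2 hΓS).trans hS) r rS
      hspan fun m hm e he hem => ?_
    by_contra hcl
    exact hm.2 (Finset.mem_filter.2 ⟨hm.1, e, he, hem, hcl⟩)
  have hcard := (card_le_of_subset_closure hN hclosure).trans (Finset.card_union_le Γ (N \ J))
  have hsdiff := Finset.card_sdiff_add_card_eq_card hJN
  omega

theorem exists_exchangeable_subset_of_forall_mem_closure_or {Q' : Matroid X} {M : Finset X}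
    (hN : Q.Indep (N : Set X)) (hN' : Q'.Indep (N : Set X)) (hM : (M : Set X) ⊆ Q.E)
    (hM' : (M : Set X) ⊆ Q'.E) (r rM : X → L)
    (h : ∀ e ∈ N, e ∈ Q.closure {m | m ∈ M ∧ r e ≤ rM m} ∨ e ∈ Q'.closure (M : Set X)) :
    ∃ Γ ⊆ M, N.card ≤ M.card + Γ.card ∧
      ∀ m ∈ Γ, m ∉ N ∧ ∃ e ∈ N, r e ≤ rM m ∧ Q.Indep (insert m ((N : Set X) \ {e})) := by
  obtain ⟨Γ, hΓM, hcard, hΓ⟩ := exists_exchangeable_subset hN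
    (Finset.filter_subset (· ∉ Q'.closure (M : Set X)) N) hM r rM fun e he =>
      (h e (Finset.mem_filter.1 he).1).resolve_right (Finset.mem_filter.1 he).2
  refine ⟨Γ, hΓM, ?_, fun m hm => ?_⟩
  · have hspanned := card_filter_mem_closure_le hN' M
    have hsplit := N.card_filter_add_card_filter_not (· ∈ Q'.closure (M : Set X))
    omega
  · obtain ⟨e, he, hem, hcl⟩ := hΓ m hm
    obtain ⟨heN, he'⟩ := Finset.mem_filter.1 he
    have hNe : Q.Indep ((N : Set X) \ {e}) := hN.subset Set.sdiff_subset
    obtain ⟨hexch, hmNe⟩ := (hNe.notMem_closure_iff (hM (hΓM hm))).1 hcl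
    refine ⟨fun hmN => hmNe ⟨hmN, ?_⟩, e, heN, hem, hexch⟩
    rintro rfl
    exact he' (Q'.mem_closure_of_mem (hΓM hm) hM')

theorem sum_card_filter_mem_closure_le (hN : Q.Indep (N : Set X)) (M : Finset X) (l : X → ℕ)
    (B : ℕ) :
    ∑ e ∈ N, ((Finset.range B).filter fun i => e ∈ Q.closure {m | m ∈ M ∧ i < l m}).card ≤
      ∑ m ∈ M, l m := by
  calc ∑ e ∈ N, ((Finset.range B).filter fun i => e ∈ Q.closure {m | m ∈ M ∧ i < l m}).card
      = ∑ i ∈ Finset.range B, (N.filter fun e => e ∈ Q.closure {m | m ∈ M ∧ i < l m}).card := by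
        simp only [Finset.card_filter]
        exact Finset.sum_comm
    _ ≤ ∑ i ∈ Finset.range B, (M.filter fun m => i < l m).card :=
        Finset.sum_le_sum fun i _ => by
          simpa only [Finset.coe_filter] using
            card_filter_mem_closure_le hN (M.filter fun m => i < l m)
    _ = ∑ m ∈ M, ((Finset.range B).filter fun i => i < l m).card := by
        simp only [Finset.card_filter]
        exact Finset.sum_comm
    _ ≤ ∑ m ∈ M, l m := Finset.sum_le_sum fun m _ =>
        (Finset.card_le_card fun i hi =>
          Finset.mem_range.2 (Finset.mem_filter.1 hi).2).trans_eq (Finset.card_range _)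

theorem le_card_filter_add_card_filter {P P' : ℕ → Prop} {n B : ℕ} (hnB : n ≤ B)
    (h : ∀ i j, i + j + 1 = n → P i ∨ P' j) :
    n ≤ ((Finset.range B).filter P).card + ((Finset.range B).filter P').card := by
  have hcover : Finset.range n ⊆
      (Finset.range B).filter P ∪ ((Finset.range B).filter P').image (n - 1 - ·) := by
    intro i hi
    rw [Finset.mem_range] at hi
    simp only [Finset.mem_union, Finset.mem_image, Finset.mem_filter, Finset.mem_range]
    exact (h i (n - 1 - i) (by omega)).imp (fun hP => ⟨by omega, hP⟩)
      (fun hP' => ⟨n - 1 - i, ⟨by omega, hP'⟩, by omega⟩)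
  calc n = (Finset.range n).card := (Finset.card_range n).symm
    _ ≤ _ := Finset.card_le_card hcover
    _ ≤ _ := Finset.card_union_le _ _
    _ ≤ _ := Nat.add_le_add_left Finset.card_image_le _

theorem sum_le_sum_add_of_forall_mem_closure_or {Q' : Matroid X} {M : Finset X} {n l l' : X → ℕ}
    (hN : Q.Indep (N : Set X)) (hN' : Q'.Indep (N : Set X))
    (h : ∀ e ∈ N, ∀ i j, i + j + 1 = n e →
      e ∈ Q.closure {m | m ∈ M ∧ i < l m} ∨ e ∈ Q'.closure {m | m ∈ M ∧ j < l' m}) :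
    ∑ e ∈ N, n e ≤ ∑ m ∈ M, (l m + l' m) := by
  let B := N.sup n
  calc ∑ e ∈ N, n e
      ≤ ∑ e ∈ N,
          (((Finset.range B).filter fun i => e ∈ Q.closure {m | m ∈ M ∧ i < l m}).card +
            ((Finset.range B).filter fun j => e ∈ Q'.closure {m | m ∈ M ∧ j < l' m}).card) :=
        Finset.sum_le_sum fun e he =>
          le_card_filter_add_card_filter (Finset.le_sup he) (h e he)
    _ ≤ ∑ m ∈ M, l m + ∑ m ∈ M, l' m := by
        rw [Finset.sum_add_distrib]
        exact Nat.add_le_add (sum_card_filter_mem_closure_le hN M l B)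
          (sum_card_filter_mem_closure_le hN' M l' B)
    _ = ∑ m ∈ M, (l m + l' m) := Finset.sum_add_distrib.symm

end MatroidCounting

section Rank

variable {E ι : Type*} {p : E → ℝ} {a : ι → E → ℝ} {e f : E} {i l : ℕ} {s : ι} {t : Option ι}

/-- The rank, on one side, of a copy of the edge `e` of level `i`: levels are compared first, then
preferences, lowered by the threshold `a s e` if the copy is marked by `s`; ties are broken in
favour of marked copies. -/
noncomputable def copyRank (p : E → ℝ) (a : ι → E → ℝ) (e : E) (i : ℕ) (t : Option ι) :
    ℕ ×ₗ ℝ ×ₗ Bool :=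
  toLex (i, toLex (p e - t.elim 0 (a · e), t.isSome))

theorem level_le_of_copyRank_le {s t : Option ι}
    (h : copyRank p a e i s ≤ copyRank p a f l t) : i ≤ l :=
  Prod.Lex.monotone_fst _ _ h

theorem threshold_le_of_copyRank_none_le (hl : l ≤ i)
    (h : copyRank p a e i none ≤ copyRank p a f l (some s)) : a s f ≤ p f - p e := by
  simp only [copyRank, Prod.Lex.toLex_le_toLex, Option.elim_none, Option.elim_some] at h
  rcases h with h | ⟨-, h | ⟨h, -⟩⟩
  · omega
  · linarith
  · linarith

theorem copyRank_lt_copyRank_some (ha : ∀ s e, 0 < a s e) (hl : l ≤ i)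
    (hp : a s e ≤ p e - p f) : copyRank p a f l t < copyRank p a e i (some s) := by
  rw [copyRank, copyRank, Prod.Lex.toLex_lt_toLex, Prod.Lex.toLex_lt_toLex]
  refine hl.lt_or_eq.imp id fun hl => ⟨hl, ?_⟩
  cases t with
  | none =>
    refine (le_sub_comm.1 hp).lt_or_eq.imp (fun h => ?_) (fun h => ⟨?_, by simp⟩)
    · simpa using h
    · simpa using h
  | some t =>
    have := ha t f
    left
    simp only [Option.elim_some]
    linarith

end Rank

section Blocking

variable {E ι : Type*} {M₁ M₂ : Matroid E} {c n : E → ℕ} {p₁ p₂ : E → ℝ}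
  {a₁ a₂ : ι → E → ℝ} {M N D : Finset E} {e : E}

theorem mem_oset {o : Option E} {x : E} : x ∈ oset o ↔ o = some x := by
  cases o <;> simp [oset, eq_comm]

/-- No common independent set weighs more than `M`, which need not be one itself. -/
def IsMaxWeight (M₁ M₂ : Matroid E) (c : E → ℕ) (M : Finset E) : Prop :=
  ∀ N : Finset E, M₁.Indep (N : Set E) → M₂.Indep (N : Set E) → ∑ e ∈ N, c e ≤ ∑ e ∈ M, c e

theorem isMaxWeight_mul_iff {K : ℕ} (hK : 0 < K) :
    IsMaxWeight M₁ M₂ (fun e => K * c e) M ↔ IsMaxWeight M₁ M₂ c M := by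
  simp only [IsMaxWeight, ← Finset.mul_sum, Nat.mul_le_mul_left_iff hK]

theorem IsMaxWeight.mono (h : IsMaxWeight M₁ M₂ c M) (hMN : M ⊆ N) : IsMaxWeight M₁ M₂ c N :=
  fun N' h₁ h₂ => (h N' h₁ h₂).trans (Finset.sum_le_sum_of_subset hMN)

/-- A copy of an element of weight `n e`, with a level for each of the two matroids. Plain copies
have levels of sum `n e + 1`; copies marked by an index have positive levels of sum `n e + 2`. -/
structure EdgeCopy (n : E → ℕ) (ι : Type*) where
  edge : E
  level₁ : ℕ
  level₂ : ℕ
  mark : Option ι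
  level_add_level : level₁ + level₂ = n edge + mark.elim 1 fun _ => 2
  level_pos : mark.isSome → 1 ≤ level₁ ∧ 1 ≤ level₂

namespace EdgeCopy

theorem level_add_level_le (z : EdgeCopy n ι) : z.level₁ + z.level₂ ≤ n z.edge + 2 := by
  have h := z.level_add_level
  cases hz : z.mark <;> simp only [hz, Option.elim_none, Option.elim_some] at h <;> omega

theorem level_le (z : EdgeCopy n ι) : z.level₁ ≤ n z.edge + 1 ∧ z.level₂ ≤ n z.edge + 1 := by
  have h := z.level_add_level
  cases hz : z.mark with
  | none =>
    simp only [hz, Option.elim_none] at h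
    omega
  | some s =>
    simp only [hz, Option.elim_some] at h
    have := z.level_pos (by simp [hz])
    omega

instance [Finite E] [Finite ι] : Finite (EdgeCopy n ι) := by
  refine Finite.of_injective (β := (Σ e, Fin (n e + 2) × Fin (n e + 2)) × Option ι)
    (fun z => (⟨z.edge, ⟨z.level₁, ?_⟩, ⟨z.level₂, ?_⟩⟩, z.mark)) ?_
  · exact Nat.lt_succ_of_le z.level_le.1
  · exact Nat.lt_succ_of_le z.level_le.2
  · rintro ⟨e, _, _, _, _, _⟩ ⟨e', _, _, _, _, _⟩ h
    obtain ⟨h, rfl⟩ := Prod.mk.inj h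
    obtain ⟨rfl, h⟩ := Sigma.mk.inj h
    simp only [heq_eq_eq, Prod.mk.injEq, Fin.mk.injEq] at h
    obtain ⟨rfl, rfl⟩ := h
    rfl

theorem edge_surjective : (edge : EdgeCopy n ι → E).Surjective :=
  fun e => ⟨⟨e, n e + 1, 0, none, rfl, nofun⟩, rfl⟩

/-- A matroid kernel of the copies of the elements, each matroid ranking the copies by their levels
and preferences. -/
abbrev IsKernel (M₁ M₂ : Matroid E) (p₁ p₂ : E → ℝ) (a₁ a₂ : ι → E → ℝ) (M : Finset E)
    (σ : E → EdgeCopy n ι) : Prop :=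
  IsLiftedKernel M₁ M₂ EdgeCopy.edge (fun z => copyRank p₁ a₁ z.edge z.level₁ z.mark)
    (fun z => copyRank p₂ a₂ z.edge z.level₂ z.mark) M σ

variable {σ : E → EdgeCopy n ι}

theorem IsKernel.edge_mem_closure (h : IsKernel M₁ M₂ p₁ p₂ a₁ a₂ M σ) (z : EdgeCopy n ι)
    (hz : z.edge ∈ M₁.E) :
    z.edge ∈ M₁.closure {m | m ∈ M ∧
        copyRank p₁ a₁ z.edge z.level₁ z.mark ≤ copyRank p₁ a₁ m (σ m).level₁ (σ m).mark} ∨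
      z.edge ∈ M₂.closure {m | m ∈ M ∧
        copyRank p₂ a₂ z.edge z.level₂ z.mark ≤ copyRank p₂ a₂ m (σ m).level₂ (σ m).mark} := by
  have hσ (m : E) : (σ m).edge = m := h.rightInverse m
  simpa only [hσ] using h.dominated z hz

theorem IsKernel.sum_le_sum_add (h : IsKernel M₁ M₂ p₁ p₂ a₁ a₂ M σ)
    (hN₁ : M₁.Indep (N : Set E)) (hN₂ : M₂.Indep (N : Set E)) :
    ∑ e ∈ N, n e ≤ ∑ m ∈ M, n m + 2 * M.card := by
  have hσ (m : E) : (σ m).edge = m := h.rightInverse m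
  calc ∑ e ∈ N, n e
      ≤ ∑ m ∈ M, ((σ m).level₁ + (σ m).level₂) := by
        refine sum_le_sum_add_of_forall_mem_closure_or hN₁ hN₂ fun e he i j hij => ?_
        refine (h.edge_mem_closure ⟨e, i + 1, j + 1, none, by simp only [Option.elim_none]; omega,
          nofun⟩ (hN₁.subset_ground he)).imp
          (fun h => M₁.closure_subset_closure ?_ h) (fun h => M₂.closure_subset_closure ?_ h)
        · exact fun m hm => ⟨hm.1, level_le_of_copyRank_le hm.2⟩
        · exact fun m hm => ⟨hm.1, level_le_of_copyRank_le hm.2⟩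
    _ ≤ ∑ m ∈ M, (n m + 2) :=
        Finset.sum_le_sum fun m _ => by simpa only [hσ] using (σ m).level_add_level_le
    _ = ∑ m ∈ M, n m + 2 * M.card := by
        rw [Finset.sum_add_distrib, Finset.sum_const, smul_eq_mul, mul_comm]

theorem IsKernel.isMaxWeight [Fintype E] {K : ℕ} {σ : E → EdgeCopy (fun e => K * c e) ι}
    (hK : 2 * Fintype.card E < K) (h : IsKernel M₁ M₂ p₁ p₂ a₁ a₂ M σ) :
    IsMaxWeight M₁ M₂ c M := by
  intro N hN₁ hN₂
  have hsum := h.sum_le_sum_add hN₁ hN₂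
  rw [← Finset.mul_sum, ← Finset.mul_sum] at hsum
  have hlt : K * ∑ e ∈ N, c e < K * (∑ e ∈ M, c e + 1) := by
    have := Finset.card_le_univ M
    rw [mul_add_one]
    omega
  exact Nat.lt_succ_iff.1 (lt_of_mul_lt_mul_left' hlt)

end EdgeCopy

variable [DecidableEq E]

/-- The edge `e` blocks `N` with respect to two matroids and a weight to be kept maximum: it can
be exchanged for at most one element of `N` in each matroid, gaining in both at least the
thresholds `a₁ s e` and `a₂ s e` for one common index `s`. -/
def MatroidBlocks (M₁ M₂ : Matroid E) (c : E → ℕ) (p₁ p₂ : E → ℝ) (a₁ a₂ : ι → E → ℝ)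
    (N : Finset E) (e : E) : Prop :=
  e ∉ N ∧ ∃ f g : Option E, oset f ⊆ N ∧ oset g ⊆ N ∧
    M₁.Indep (insert e ((N : Set E) \ oset f)) ∧ M₂.Indep (insert e ((N : Set E) \ oset g)) ∧
    IsMaxWeight M₁ M₂ c (insert e (N \ (oset f ∪ oset g))) ∧
    ∃ s, a₁ s e ≤ p₁ e - oval p₁ f ∧ a₂ s e ≤ p₂ e - oval p₂ g

theorem matroidBlocks_mul_iff {K : ℕ} (hK : 0 < K) :
    MatroidBlocks M₁ M₂ (fun e => K * c e) p₁ p₂ a₁ a₂ N e ↔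
      MatroidBlocks M₁ M₂ c p₁ p₂ a₁ a₂ N e := by
  simp only [MatroidBlocks, isMaxWeight_mul_iff hK]

theorem sum_insert_sdiff_add_sum (c : E → ℕ) (hD : D ⊆ M) (he : e ∉ M) :
    ∑ x ∈ insert e (M \ D), c x + ∑ x ∈ D, c x = ∑ x ∈ M, c x + c e := by
  rw [Finset.sum_insert fun h => he (Finset.mem_sdiff.1 h).1, add_assoc, Finset.sum_sdiff hD,
    add_comm]

namespace EdgeCopy

variable {σ : E → EdgeCopy n ι}

theorem exists_levels_ge (hσ : ∀ m, (σ m).edge = m) {f g : Option E}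
    (hw : ∑ x ∈ oset f ∪ oset g, n x ≤ n e) :
    ∃ i j, i + j = n e + 2 ∧ 1 ≤ i ∧ 1 ≤ j ∧
      (∀ x ∈ oset f, (σ x).level₁ ≤ i) ∧ ∀ x ∈ oset g, (σ x).level₂ ≤ j := by
  have hle (x : E) : (σ x).level₁ ≤ n x + 1 ∧ (σ x).level₂ ≤ n x + 1 := by
    simpa only [hσ] using (σ x).level_le
  have hadd (x : E) : (σ x).level₁ + (σ x).level₂ ≤ n x + 2 := by
    simpa only [hσ] using (σ x).level_add_level_le
  have hf (x : E) (hx : x ∈ oset f) : n x ≤ n e :=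
    (Finset.single_le_sum_of_canonicallyOrdered (Finset.mem_union_left _ hx)).trans hw
  have hg (x : E) (hx : x ∈ oset g) : n x ≤ n e :=
    (Finset.single_le_sum_of_canonicallyOrdered (Finset.mem_union_right _ hx)).trans hw
  have hfg (x y : E) (hx : x ∈ oset f) (hy : y ∈ oset g) (hxy : x ≠ y) : n x + n y ≤ n e := by
    rw [← Finset.sum_pair hxy]
    refine (Finset.sum_le_sum_of_subset ?_).trans hw
    grind
  rcases f with _ | x
  · exact ⟨1, n e + 1, by omega, le_rfl, by omega, nofun,
      fun y hy => (hle y).2.trans (Nat.succ_le_succ (hg y hy))⟩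
  · have hx : x ∈ oset (some x) := Finset.mem_singleton_self x
    have := hf x hx
    have := hle x
    refine ⟨max 1 (σ x).level₁, n e + 2 - max 1 (σ x).level₁, by omega, by omega, by omega,
      fun y hy => Finset.mem_singleton.1 hy ▸ le_max_right _ _, fun y hy => ?_⟩
    have := hle y
    have := hg y hy
    by_cases hxy : x = y
    · have := hadd x
      subst hxy
      omega
    · have := hfg x y hx hy hxy
      omega

theorem IsKernel.not_matroidBlocks (h : IsKernel M₁ M₂ p₁ p₂ a₁ a₂ M σ)
    (ha₁ : ∀ s e, 0 < a₁ s e) (ha₂ : ∀ s e, 0 < a₂ s e) (e : E) :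
    ¬ MatroidBlocks M₁ M₂ n p₁ p₂ a₁ a₂ M e := by
  rintro ⟨heM, f, g, hf, hg, hfI, hgI, hmax, s, hs₁, hs₂⟩
  have hw := hmax M h.indep₁ h.indep₂
  have hexch := sum_insert_sdiff_add_sum n (Finset.union_subset hf hg) heM
  obtain ⟨i, j, hij, hi, hj, hfi, hgj⟩ :=
    exists_levels_ge (f := f) (g := g) (e := e) h.rightInverse (by omega)
  have undominated {Q : Matroid E} {o : Option E} {P : E → Prop}
      (hQ : Q.Indep (insert e ((M : Set E) \ oset o))) (hP : ∀ x ∈ oset o, ¬ P x) :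
      e ∉ Q.closure {m | m ∈ M ∧ P m} := by
    intro hcl
    refine hQ.notMem_closure_sdiff_of_mem (Set.mem_insert _ _) (Q.closure_subset_closure ?_ hcl)
    rintro m ⟨hm, hPm⟩
    exact ⟨.inr ⟨hm, fun hmo => hP m hmo hPm⟩, fun hme => heM (hme ▸ hm)⟩
  -- The marked copy of `e` with these levels beats the copies of `f` and `g` in `M`.
  refine (h.edge_mem_closure ⟨e, i, j, some s, hij, fun _ => ⟨hi, hj⟩⟩
    (hfI.subset_ground (Set.mem_insert _ _))).elim (undominated hfI ?_) (undominated hgI ?_)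
  · intro x hx
    rw [mem_oset.1 hx] at hs₁
    exact (copyRank_lt_copyRank_some ha₁ (hfi x hx) hs₁).not_ge
  · intro x hx
    rw [mem_oset.1 hx] at hs₂
    exact (copyRank_lt_copyRank_some ha₂ (hgj x hx) hs₂).not_ge

theorem matroidBlocks_of_copyRank_le {f g : E} (z : EdgeCopy n ι) (hz : z.edge = e)
    (hmax : IsMaxWeight M₁ M₂ n N) (he : e ∉ N) (hf : f ∈ N) (hg : g ∈ N)
    (hfI : M₁.Indep (insert e ((N : Set E) \ {f})))
    (hgI : M₂.Indep (insert e ((N : Set E) \ {g})))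
    (hfz : copyRank p₁ a₁ f (n f + 1) none ≤ copyRank p₁ a₁ e z.level₁ z.mark)
    (hgz : copyRank p₂ a₂ g (n g + 1) none ≤ copyRank p₂ a₂ e z.level₂ z.mark) :
    MatroidBlocks M₁ M₂ n p₁ p₂ a₁ a₂ N e := by
  subst hz
  have hlf := level_le_of_copyRank_le hfz
  have hlg := level_le_of_copyRank_le hgz
  have hsum := z.level_add_level
  have hexch := sum_insert_sdiff_add_sum n
    (Finset.union_subset (Finset.singleton_subset_iff.2 hf) (Finset.singleton_subset_iff.2 hg)) he
  have hD : ∑ x ∈ {f} ∪ {g}, n x ≤ n f + n g := by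
    have := Finset.sum_union_inter (s₁ := {f}) (s₂ := {g}) (f := n)
    simp only [Finset.sum_singleton] at this
    omega
  have hnew : ∑ x ∈ insert z.edge (N \ ({f} ∪ {g})), n x ≤ ∑ x ∈ N, n x := by
    refine hmax _ (hfI.subset ?_) (hgI.subset ?_)
    all_goals
      rw [Finset.coe_insert, Finset.coe_sdiff]
      exact Set.insert_subset_insert (Set.sdiff_subset_sdiff_right (by simp))
  cases hs : z.mark with
  | none =>
    simp only [hs, Option.elim_none] at hsum
    omega
  | some s =>
    simp only [hs, Option.elim_some] at hsum hfz hgz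
    refine ⟨he, some f, some g, Finset.singleton_subset_iff.2 hf, Finset.singleton_subset_iff.2 hg,
      by simpa [oset] using hfI, by simpa [oset] using hgI,
      fun N' h₁ h₂ => (hmax N' h₁ h₂).trans ?_,
      s, threshold_le_of_copyRank_none_le (by omega) hfz,
      threshold_le_of_copyRank_none_le (by omega) hgz⟩
    simp only [oset]
    omega

theorem IsKernel.two_mul_card_le (h : IsKernel M₁ M₂ p₁ p₂ a₁ a₂ M σ)
    (hN₁ : M₁.Indep (N : Set E)) (hN₂ : M₂.Indep (N : Set E)) (hmax : IsMaxWeight M₁ M₂ n N)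
    (hN : ∀ e, ¬ MatroidBlocks M₁ M₂ n p₁ p₂ a₁ a₂ N e) : 2 * N.card ≤ 3 * M.card := by
  have hM₁ := h.indep₁.subset_ground
  have hM₂ := h.indep₂.subset_ground
  obtain ⟨Γ₁, hΓ₁M, hcard₁, hΓ₁⟩ := exists_exchangeable_subset_of_forall_mem_closure_or
    hN₁ hN₂ hM₁ hM₂ (fun e => copyRank p₁ a₁ e (n e + 1) none)
    (fun m => copyRank p₁ a₁ m (σ m).level₁ (σ m).mark) fun e he =>
      (h.edge_mem_closure ⟨e, n e + 1, 0, none, rfl, nofun⟩ (hN₁.subset_ground he)).imp id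
        fun hcl => M₂.closure_subset_closure (Set.sep_subset _ _) hcl
  obtain ⟨Γ₂, hΓ₂M, hcard₂, hΓ₂⟩ := exists_exchangeable_subset_of_forall_mem_closure_or
    hN₂ hN₁ hM₂ hM₁ (fun e => copyRank p₂ a₂ e (n e + 1) none)
    (fun m => copyRank p₂ a₂ m (σ m).level₂ (σ m).mark) fun e he =>
      (h.edge_mem_closure ⟨e, 0, n e + 1, none, Nat.zero_add _, nofun⟩
        (hN₁.subset_ground he)).symm.imp id
          fun hcl => M₁.closure_subset_closure (Set.sep_subset _ _) hcl
  have hdisj : Disjoint Γ₁ Γ₂ := Finset.disjoint_left.2 fun m hm₁ hm₂ => by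
    obtain ⟨hmN, f, hf, hfm, hfI⟩ := hΓ₁ m hm₁
    obtain ⟨-, g, hg, hgm, hgI⟩ := hΓ₂ m hm₂
    exact hN m
      (matroidBlocks_of_copyRank_le (σ m) (h.rightInverse m) hmax hmN hf hg hfI hgI hfm hgm)
  have hΓ := Finset.card_le_card (Finset.union_subset hΓ₁M hΓ₂M)
  rw [Finset.card_union_of_disjoint hdisj] at hΓ
  omega

end EdgeCopy

theorem exists_isMaxWeight_not_matroidBlocks_three_halves [Finite E] [Finite ι]
    (hE : M₁.E = M₂.E) (c : E → ℕ) (p₁ p₂ : E → ℝ) (ha₁ : ∀ s e, 0 < a₁ s e)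
    (ha₂ : ∀ s e, 0 < a₂ s e) :
    ∃ M : Finset E, M₁.Indep (M : Set E) ∧ M₂.Indep (M : Set E) ∧ IsMaxWeight M₁ M₂ c M ∧
      (∀ e, ¬ MatroidBlocks M₁ M₂ c p₁ p₂ a₁ a₂ M e) ∧
      ∀ N : Finset E, M₁.Indep (N : Set E) → M₂.Indep (N : Set E) → IsMaxWeight M₁ M₂ c N →
        (∀ e, ¬ MatroidBlocks M₁ M₂ c p₁ p₂ a₁ a₂ N e) → 2 * N.card ≤ 3 * M.card := by
  have := Fintype.ofFinite E
  obtain ⟨K, hK⟩ : ∃ K, 2 * Fintype.card E < K := exists_gt _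
  have hK₀ : 0 < K := by omega
  obtain ⟨M, σ, h⟩ : ∃ M, ∃ σ : E → EdgeCopy (fun e => K * c e) ι,
      EdgeCopy.IsKernel M₁ M₂ p₁ p₂ a₁ a₂ M σ :=
    exists_isLiftedKernel hE EdgeCopy.edge_surjective _ _
  refine ⟨M, h.indep₁, h.indep₂, h.isMaxWeight hK, fun e he => ?_, fun N hN₁ hN₂ hmax hN => ?_⟩
  · exact h.not_matroidBlocks ha₁ ha₂ e ((matroidBlocks_mul_iff hK₀).2 he)
  · exact h.two_mul_card_le hN₁ hN₂ ((isMaxWeight_mul_iff hK₀).2 hmax)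
      fun e he => hN e ((matroidBlocks_mul_iff hK₀).1 he)

end Blocking

section Incidence

variable {V E : Type*} {π : E → V} {m : V → Matroid E}

theorem pairwise_disjoint_ground_of_eq_fiber (h : ∀ v, (m v).E = {e | π e = v}) :
    Pairwise (Function.onFun Disjoint fun v => (m v).E) := by
  intro u v huv
  rw [Function.onFun, h, h]
  exact Set.disjoint_left.2 fun _ hu hv => huv (hu.symm.trans hv)

/-- The direct sum of matroids given on the fibres of `π`, as a matroid on all of `E`. -/
def fiberMatroid (π : E → V) (m : V → Matroid E) (h : ∀ v, (m v).E = {e | π e = v}) : Matroid E :=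
  Matroid.disjointSigma m (pairwise_disjoint_ground_of_eq_fiber h)

variable (h : ∀ v, (m v).E = {e | π e = v})

theorem fiberMatroid_ground : (fiberMatroid π m h).E = Set.univ := by
  rw [fiberMatroid, Matroid.disjointSigma_ground_eq]
  exact Set.eq_univ_of_forall fun e => Set.mem_iUnion.2 ⟨π e, (h (π e)).symm ▸ rfl⟩

theorem fiberMatroid_indep_iff {I : Set E} :
    (fiberMatroid π m h).Indep I ↔ ∀ v, (m v).Indep (I ∩ {e | π e = v}) := by
  have hI := (Set.subset_univ I).trans_eq (fiberMatroid_ground h).symm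
  rw [fiberMatroid, Matroid.disjointSigma_ground_eq] at hI
  rw [fiberMatroid, Matroid.disjointSigma_indep_iff, and_iff_left hI]
  simp only [h]

theorem fiberMatroid_indep_insert_iff {J : Set E} (hJ : (fiberMatroid π m h).Indep J) {e : E} :
    (fiberMatroid π m h).Indep (insert e J) ↔
      (m (π e)).Indep (insert e (J ∩ {f | π f = π e})) := by
  rw [fiberMatroid_indep_iff] at hJ ⊢
  have hfiber : insert e J ∩ {f | π f = π e} = insert e (J ∩ {f | π f = π e}) :=
    Set.insert_inter_of_mem rfl
  refine ⟨fun hI => hfiber ▸ hI (π e), fun hI v => ?_⟩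
  obtain rfl | hv := eq_or_ne (π e) v
  · rwa [hfiber]
  · rw [Set.insert_inter_of_notMem (show e ∉ {f | π f = v} from hv)]
    exact hJ v

theorem fiberMatroid_indep_insert_sdiff_iff [DecidableEq E] {N D : Finset E}
    (hN : (fiberMatroid π m h).Indep (N : Set E)) {e : E} :
    (fiberMatroid π m h).Indep (insert e ((N : Set E) \ D)) ↔
      (m (π e)).Indep ((insert e (N.filter (fun f => π f = π e) \ D) : Finset E) : Set E) := by
  rw [fiberMatroid_indep_insert_iff h (hN.subset Set.sdiff_subset)]
  congr! 1
  ext f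
  simp
  tauto

end Incidence

section OptionFilter

variable {E : Type*} {o : Option E}

theorem oset_filter_subset (P : E → Bool) : oset (o.filter P) ⊆ oset o :=
  fun _ hx => mem_oset.2 (Option.mem_filter_iff.1 (mem_oset.1 hx)).1

theorem filter_sdiff_oset_filter [DecidableEq E] (N : Finset E) (P : E → Prop) [DecidablePred P] :
    N.filter P \ oset (o.filter fun x => P x) = N.filter P \ oset o := by
  ext x
  simp only [Finset.mem_sdiff, Finset.mem_filter, mem_oset, Option.filter_eq_some_iff]
  grind

theorem oval_filter_le {p : E → ℝ} (hp : ∀ e, 0 ≤ p e) (P : E → Bool) :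
    oval p (o.filter P) ≤ oval p o := by
  cases o with
  | none => rfl
  | some x =>
    rw [Option.filter_some]
    split
    · rfl
    · exact hp x

end OptionFilter

section Instance

variable {U W E : Type*} {eu : E → U} {ew : E → W} {mU : U → Matroid E} {mW : W → Matroid E}
  (hmU : ∀ u, (mU u).E = {f | eu f = u}) (hmW : ∀ w, (mW w).E = {f | ew f = w})
  {C : Finset (U ⊕ W)} {Ec : Finset E}

theorem commonIndep_iff {M : Finset E} : CommonIndep eu ew mU mW M ↔
    (fiberMatroid eu mU hmU).Indep (M : Set E) ∧ (fiberMatroid ew mW hmW).Indep (M : Set E) := by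
  simp only [CommonIndep, fiberMatroid_indep_iff, Finset.coe_filter]
  rfl

/-- The number of critical places filled by the edge `e` alone. -/
noncomputable def edgeWeight (eu : E → U) (ew : E → W) (C : Finset (U ⊕ W)) (Ec : Finset E)
    (e : E) : ℕ :=
  if e ∈ Ec then (C.filter (Sum.elim (fun u => eu e = u) (fun w => ew e = w))).card else 0

theorem critPlaces_eq_sum [DecidableEq E] (M : Finset E) :
    critPlaces eu ew C Ec M = ∑ e ∈ M, edgeWeight eu ew C Ec e := by
  simp only [critPlaces, edgeWeight, Finset.card_filter]
  rw [Finset.sum_comm, ← Finset.sum_filter, Finset.filter_mem_eq_inter]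

theorem isCriticalCI_iff [DecidableEq E] {M : Finset E} :
    IsCriticalCI eu ew mU mW C Ec M ↔
      IsMaxWeight (fiberMatroid eu mU hmU) (fiberMatroid ew mW hmW) (edgeWeight eu ew C Ec) M := by
  simp only [IsCriticalCI, IsMaxWeight, critPlaces_eq_sum, commonIndep_iff hmU hmW, and_imp]

theorem cgBlocksCI_iff [DecidableEq E] {pU pW γU δU γW δW : E → ℝ} (hpU : ∀ e, 0 ≤ pU e)
    (hpW : ∀ e, 0 ≤ pW e) {N : Finset E} (hN : CommonIndep eu ew mU mW N) {e : E} :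
    CGBlocksCI eu ew mU mW pU pW γU δU γW δW C Ec N e ↔
      MatroidBlocks (fiberMatroid eu mU hmU) (fiberMatroid ew mW hmW) (edgeWeight eu ew C Ec)
        pU pW ![γU, δU] ![δW, γW] N e := by
  obtain ⟨hNU, hNW⟩ := (commonIndep_iff hmU hmW).1 hN
  constructor
  · rintro ⟨heN, f, g, hf, hg, -, hcrit, hU, hW, hgain⟩
    exact ⟨heN, f, g, fun x hx => (hf x (mem_oset.1 hx)).1, fun x hx => (hg x (mem_oset.1 hx)).1,
      (fiberMatroid_indep_insert_sdiff_iff hmU hNU).2 hU,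
      (fiberMatroid_indep_insert_sdiff_iff hmW hNW).2 hW,
      (isCriticalCI_iff hmU hmW).1 hcrit, Fin.exists_fin_two.2 hgain⟩
  · rintro ⟨heN, f, g, hf, hg, hU, hW, hmax, hgain⟩
    -- Removing an edge that does not meet `e` is useless, since preferences are nonnegative.
    let f' := f.filter fun x => eu x = eu e
    let g' := g.filter fun x => ew x = ew e
    have hf' : oset f' ⊆ oset f := oset_filter_subset _
    have hg' : oset g' ⊆ oset g := oset_filter_subset _
    have hU' := (fiberMatroid_indep_insert_sdiff_iff hmU hNU).1 hU
    have hW' := (fiberMatroid_indep_insert_sdiff_iff hmW hNW).1 hW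
    rw [← filter_sdiff_oset_filter] at hU' hW'
    have hpf : oval pU f' ≤ oval pU f := oval_filter_le hpU _
    have hpg : oval pW g' ≤ oval pW g := oval_filter_le hpW _
    refine ⟨heN, f', g', ?_, ?_, (commonIndep_iff hmU hmW).2 ⟨?_, ?_⟩,
      (isCriticalCI_iff hmU hmW).2 (hmax.mono ?_), hU', hW', ?_⟩
    · intro x hx
      obtain ⟨hx, hxe⟩ := Option.mem_filter_iff.1 hx
      exact ⟨hf (mem_oset.2 hx), of_decide_eq_true hxe⟩
    · intro x hx
      obtain ⟨hx, hxe⟩ := Option.mem_filter_iff.1 hx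
      exact ⟨hg (mem_oset.2 hx), of_decide_eq_true hxe⟩
    · refine ((fiberMatroid_indep_insert_sdiff_iff hmU hNU).2 hU').subset ?_
      grind
    · refine ((fiberMatroid_indep_insert_sdiff_iff hmW hNW).2 hW').subset ?_
      grind
    · grind
    · refine (Fin.exists_fin_two.1 hgain).imp (fun h => ?_) (fun h => ?_)
      all_goals
        simp only [Matrix.cons_val_zero, Matrix.cons_val_one] at h
        exact ⟨by linarith, by linarith⟩

end Instance

theorem exists_cgamma_stable_common_independent_three_halves_general {U W E : Type*} [Finite E]
    [DecidableEq E] (eu : E → U) (ew : E → W) (pU pW : E → ℝ)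
    (hpU : ∀ e, 0 ≤ pU e) (hpW : ∀ e, 0 ≤ pW e)
    (mU : U → Matroid E) (mW : W → Matroid E)
    (hmU : ∀ u, (mU u).E = {f | eu f = u}) (hmW : ∀ w, (mW w).E = {f | ew f = w})
    (C : Finset (U ⊕ W)) (Ec : Finset E) (γU δU γW δW : E → ℝ)
    (hγU : ∀ e, 0 < γU e) (hδU : ∀ e, 0 < δU e) (hγW : ∀ e, 0 < γW e) (hδW : ∀ e, 0 < δW e) :
    ∃ M : Finset E, CommonIndep eu ew mU mW M ∧ IsCriticalCI eu ew mU mW C Ec M ∧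
      (∀ e, ¬ CGBlocksCI eu ew mU mW pU pW γU δU γW δW C Ec M e) ∧
      (∀ N : Finset E, CommonIndep eu ew mU mW N → IsCriticalCI eu ew mU mW C Ec N →
        (∀ e, ¬ CGBlocksCI eu ew mU mW pU pW γU δU γW δW C Ec N e) →
        2 * N.card ≤ 3 * M.card) := by
  obtain ⟨M, hMU, hMW, hmax, hstable, hbound⟩ :=
    exists_isMaxWeight_not_matroidBlocks_three_halves (M₁ := fiberMatroid eu mU hmU)
      (M₂ := fiberMatroid ew mW hmW) (a₁ := ![γU, δU]) (a₂ := ![δW, γW])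
      (by rw [fiberMatroid_ground, fiberMatroid_ground]) (edgeWeight eu ew C Ec) pU pW
      (Fin.forall_fin_two.2 ⟨hγU, hδU⟩) (Fin.forall_fin_two.2 ⟨hδW, hγW⟩)
  have hM : CommonIndep eu ew mU mW M := (commonIndep_iff hmU hmW).2 ⟨hMU, hMW⟩
  refine ⟨M, hM, (isCriticalCI_iff hmU hmW).2 hmax, fun e he => ?_, fun N hN hcrit hNstable => ?_⟩
  · exact hstable e ((cgBlocksCI_iff hmU hmW hpU hpW hM).1 he)
  · obtain ⟨hNU, hNW⟩ := (commonIndep_iff hmU hmW).1 hN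
    exact hbound N hNU hNW ((isCriticalCI_iff hmU hmW).1 hcrit)
      fun e he => hNstable e ((cgBlocksCI_iff hmU hmW hpU hpW hN).2 he)

/-- For every finite bipartite multigraph with preference functions, a
matroid `M_v` on `E(v)` for each vertex `v`, critical vertices `C`, critical edges `E_c`
(each incident to a critical vertex) and reals `0 < γ_e^v < δ_e^v`, there is a cγ-stable
common independent set `M` (critical and with no cγ-blocking edge) such that every
cγ-stable common independent set `N` satisfies `2|N| ≤ 3|M|`. -/
theorem exists_cgamma_stable_common_independent_three_halves {U W E : Type*} [Fintype U]
    [Fintype W] [Fintype E] [DecidableEq E]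
    (eu : E → U) (ew : E → W) (pU pW : E → ℝ)
    (hpU : ∀ e, 0 ≤ pU e) (hpW : ∀ e, 0 ≤ pW e)
    (mU : U → Matroid E) (mW : W → Matroid E)
    (hmU : ∀ u, (mU u).E = {f | eu f = u}) (hmW : ∀ w, (mW w).E = {f | ew f = w})
    (C : Finset (U ⊕ W)) (Ec : Finset E)
    (hEc : ∀ e ∈ Ec, Sum.inl (eu e) ∈ C ∨ Sum.inr (ew e) ∈ C)
    (γU δU γW δW : E → ℝ)
    (hγU : ∀ e, 0 < γU e) (hγδU : ∀ e, γU e < δU e)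
    (hγW : ∀ e, 0 < γW e) (hγδW : ∀ e, γW e < δW e) :
    ∃ M : Finset E, CommonIndep eu ew mU mW M ∧ IsCriticalCI eu ew mU mW C Ec M ∧
      (∀ e, ¬ CGBlocksCI eu ew mU mW pU pW γU δU γW δW C Ec M e) ∧
      (∀ N : Finset E, CommonIndep eu ew mU mW N → IsCriticalCI eu ew mU mW C Ec N →
        (∀ e, ¬ CGBlocksCI eu ew mU mW pU pW γU δU γW δW C Ec N e) →
        2 * N.card ≤ 3 * M.card) := by
  exact exists_cgamma_stable_common_independent_three_halves_general eu ew pU pW hpU hpW mU mW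
    hmU hmW C Ec γU δU γW δW hγU (fun e => (hγU e).trans (hγδU e)) hγW
    fun e => (hγW e).trans (hγδW e)
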